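/- Let Q ⊆ ℝ^m be a nonempty closed convex set having the uniform second-order tangent path (uSOTP) property at λ̄ ∈ Q, let U be an open neighborhood of x̄ ∈ ℝⁿ, and let F : U → ℝ^m be twice continuously differentiable with F(x̄) = 0. Assume Robinson's constraint qualification 0 ∈ int{DF(x̄)h − y : h ∈ ℝⁿ, y ∈ ℝ^m with σ_Q(y) < +∞} and the strict constraint qualification {DF(x̄)h − v : h ∈ ℝⁿ, v ∈ N_Q(λ̄)} = ℝ^m, and set φ(x) = σ_Q(F(x)) for x ∈ U. Then for every h ∈ ℝⁿ: d²_s φ(x̄ | DF(x̄)ᵀλ̄)(h) = ⟨λ̄, D²F(x̄)[h,h]⟩ if h ∈ aff( DF(x̄)⁻¹(N_Q(λ̄)) ), and d²_s φ(x̄ | DF(x̄)ᵀλ̄)(h) = +∞ otherwise. -/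

import Mathlib

open Filter Topology Set
open scoped InnerProductSpace Pointwise

noncomputable section

/-- Support function of `Q ⊆ ℝ^m`, with values in the extended reals. -/
def supportFn {m : ℕ} (Q : Set (EuclideanSpace ℝ (Fin m))) (x : EuclideanSpace ℝ (Fin m)) :
    EReal :=
  ⨆ z ∈ Q, ((⟪z, x⟫_ℝ : ℝ) : EReal)

/-- The normal cone of a convex set `Q ⊆ ℝ^m` at a point `lam ∈ Q`. -/
def normalCone {m : ℕ} (Q : Set (EuclideanSpace ℝ (Fin m))) (lam : EuclideanSpace ℝ (Fin m)) :
    Set (EuclideanSpace ℝ (Fin m)) :=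
  {v | ∀ y ∈ Q, ⟪v, y - lam⟫_ℝ ≤ 0}

/-- The tangent cone of a convex set `Q` at `lam`: the closure of `⋃_{t>0} t • (Q - lam)`. -/
def tangentConeSet {m : ℕ} (Q : Set (EuclideanSpace ℝ (Fin m))) (lam : EuclideanSpace ℝ (Fin m)) :
    Set (EuclideanSpace ℝ (Fin m)) :=
  closure (⋃ t ∈ Set.Ioi (0 : ℝ), t • ((fun z => z - lam) '' Q))

/-- The lineality space `lin(T_Q(lam)) = T_Q(lam) ∩ (−T_Q(lam))` of the tangent cone. -/
def linTangent {m : ℕ} (Q : Set (EuclideanSpace ℝ (Fin m))) (lam : EuclideanSpace ℝ (Fin m)) :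
    Set (EuclideanSpace ℝ (Fin m)) :=
  tangentConeSet Q lam ∩ (-(tangentConeSet Q lam))

/-- The uniform second-order tangent path (uSOTP) property of `Q` at `lam0`. -/
def uSOTP {m : ℕ} (Q : Set (EuclideanSpace ℝ (Fin m))) (lam0 : EuclideanSpace ℝ (Fin m)) : Prop :=
  ∃ δ > (0 : ℝ), ∃ M > (0 : ℝ), ∃ V ∈ 𝓝 lam0,
    ∃ S : EuclideanSpace ℝ (Fin m) → Submodule ℝ (EuclideanSpace ℝ (Fin m)),
      (∀ lam ∈ Q ∩ V, (S lam : Set (EuclideanSpace ℝ (Fin m))) ⊆ linTangent Q lam) ∧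
      (∀ lamSeq : ℕ → EuclideanSpace ℝ (Fin m), (∀ k, lamSeq k ∈ Q) →
        Tendsto lamSeq atTop (𝓝 lam0) →
        (∀ v ∈ linTangent Q lam0, ∃ vs : ℕ → EuclideanSpace ℝ (Fin m),
          (∀ k, vs k ∈ S (lamSeq k)) ∧ Tendsto vs atTop (𝓝 v)) ∧
        (∀ vs : ℕ → EuclideanSpace ℝ (Fin m), (∀ k, vs k ∈ S (lamSeq k)) →
          ∀ p, MapClusterPt p atTop vs → p ∈ linTangent Q lam0)) ∧
      (∀ lam ∈ Q ∩ V, ∀ v ∈ S lam, ‖v‖ = 1 →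
        ∃ r : ℝ → EuclideanSpace ℝ (Fin m),
          ∀ t ∈ Set.Icc (0 : ℝ) δ, ‖r t‖ ≤ M ∧ lam + t • v + (t ^ 2 / 2) • r t ∈ Q)

/-- Second-order difference quotient `Δ²_t f(x|v)(h)`. -/
def secondDQ {n : ℕ} (f : EuclideanSpace ℝ (Fin n) → EReal)
    (x v : EuclideanSpace ℝ (Fin n)) (t : ℝ) (h : EuclideanSpace ℝ (Fin n)) : EReal :=
  ((2 / t ^ 2 : ℝ) : EReal) * (f (x + t • h) - f x - ((t * ⟪v, h⟫_ℝ : ℝ) : EReal))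

/-- Strict second subderivative of the support function `σ_Q` at `0` for `lam0` in direction `w`. -/
def strictD2supp {m : ℕ} (Q : Set (EuclideanSpace ℝ (Fin m))) (lam0 : EuclideanSpace ℝ (Fin m))
    (w : EuclideanSpace ℝ (Fin m)) : EReal :=
  liminf
    (fun p : ℝ × EuclideanSpace ℝ (Fin m) × EuclideanSpace ℝ (Fin m) × EuclideanSpace ℝ (Fin m) =>
      secondDQ (supportFn Q) p.2.2.1 p.2.2.2 p.1 p.2.1)
    (((𝓝[>] (0 : ℝ)) ×ˢ (𝓝 w ×ˢ (𝓝 (0 : EuclideanSpace ℝ (Fin m)) ×ˢ 𝓝 lam0))) ⊓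
      Filter.principal
        {p : ℝ × EuclideanSpace ℝ (Fin m) × EuclideanSpace ℝ (Fin m) × EuclideanSpace ℝ (Fin m) |
          p.2.2.2 ∈ Q ∧ supportFn Q p.2.2.1 = ((⟪p.2.2.2, p.2.2.1⟫_ℝ : ℝ) : EReal)})

/-- Strict second subderivative of `φ = σ_Q ∘ F` at `xbar` for `vbar` in direction `h`. -/
def strictD2phi {n m : ℕ} (Q : Set (EuclideanSpace ℝ (Fin m)))
    (F : EuclideanSpace ℝ (Fin n) → EuclideanSpace ℝ (Fin m))
    (F' : EuclideanSpace ℝ (Fin n) → (EuclideanSpace ℝ (Fin n) →L[ℝ] EuclideanSpace ℝ (Fin m)))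
    (xbar vbar h : EuclideanSpace ℝ (Fin n)) : EReal :=
  liminf
    (fun p : ℝ × EuclideanSpace ℝ (Fin n) × EuclideanSpace ℝ (Fin n) × EuclideanSpace ℝ (Fin n) =>
      secondDQ (fun x => supportFn Q (F x)) p.2.2.1 p.2.2.2 p.1 p.2.1)
    (((𝓝[>] (0 : ℝ)) ×ˢ (𝓝 h ×ˢ (𝓝 xbar ×ˢ 𝓝 vbar))) ⊓
      Filter.principal
        {p : ℝ × EuclideanSpace ℝ (Fin n) × EuclideanSpace ℝ (Fin n) × EuclideanSpace ℝ (Fin n) |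
          ∃ lam ∈ Q, p.2.2.2 = ContinuousLinearMap.adjoint (F' p.2.2.1) lam ∧
            supportFn Q (F p.2.2.1) = ((⟪lam, F p.2.2.1⟫_ℝ : ℝ) : EReal)})

/-!
On pairs `(x, lam)` with `lam` attaining the supremum in `supportFn Q (F x)`, the strict constraint
qualification bounds `‖lam - lambar‖` by a multiple of the distance of subgradients, so the strict
second subderivative is a liminf over multipliers `lam → lambar`. Testing the support function at
`x + t k` with `lam` itself bounds the quotient below by the Taylor quotient of `⟪lam, F ·⟫`, which
tends to `⟪lambar, F'' h h⟫`.

If `F' xbar h` lies in the span of the normal cone, write `h` as the difference of two directions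
which `F' xbar` maps into the relative interior of that cone. The implicit function theorem gives
curves with these velocities along which `F` stays in the cone; there `lambar` attains both suprema,
and the bound is attained in the limit.

Otherwise some `v` in the lineality space of the tangent cone, the orthogonal complement of that
span, has `0 < ⟪v, F' xbar h⟫`. Testing instead with the point at time `K t` of the tangent path
from `lam` in a nearby direction improves the lower bound by a fixed positive multiple of `K`, and
`K` is arbitrary.
-/

section Taylor

variable {E G ι : Type*} [NormedAddCommGroup E] [NormedSpace ℝ E]
  [NormedAddCommGroup G] [NormedSpace ℝ G]
  {F : E → G} {F' : E → E →L[ℝ] G} {F'' : E →L[ℝ] E →L[ℝ] G} {a : E}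

theorem norm_taylor_two_remainder_le {x k : E} {ε : ℝ}
    (hF : ∀ s ∈ Icc (0 : ℝ) 1, HasFDerivAt F (F' (x + s • k)) (x + s • k))
    (hF' : ∀ s ∈ Ico (0 : ℝ) 1, ‖F' (x + s • k) - F' x - F'' (s • k)‖ ≤ ε * ‖k‖) :
    ‖F (x + k) - F x - F' x k - (1 / 2 : ℝ) • F'' k k‖ ≤ ε * ‖k‖ ^ 2 := by
  let remainder : ℝ → G := fun s =>
    F (x + s • k) - F x - s • F' x k - (s ^ 2 / 2) • F'' k k
  have hderiv : ∀ s ∈ Icc (0 : ℝ) 1, HasDerivWithinAt remainder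
      ((F' (x + s • k) - F' x - F'' (s • k)) k) (Icc 0 1) s := by
    intro s hs
    have hline : HasDerivAt (fun s : ℝ => x + s • k) k s := by
      simpa using ((hasDerivAt_id s).smul_const k).const_add x
    have hF_line := (hF s hs).comp_hasDerivAt s hline
    have hlinear : HasDerivAt (fun s : ℝ => s • F' x k) (F' x k) s := by
      simpa using (hasDerivAt_id s).smul_const (F' x k)
    have hsquare : HasDerivAt (fun s : ℝ => (s ^ 2 / 2) • F'' k k) (s • F'' k k) s := by
      have hhalf : HasDerivAt (fun s : ℝ => s ^ 2 / 2) s s := by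
        simpa using ((hasDerivAt_id s).pow 2).div_const 2
      exact hhalf.smul_const (F'' k k)
    have htotal := (((hF_line.sub_const (F x)).sub hlinear).sub hsquare).hasDerivWithinAt
      (s := Icc (0 : ℝ) 1)
    rw [map_smul]
    exact htotal
  have hbound : ∀ s ∈ Ico (0 : ℝ) 1,
      ‖(F' (x + s • k) - F' x - F'' (s • k)) k‖ ≤ ε * ‖k‖ ^ 2 := fun s hs =>
    calc _ ≤ ‖F' (x + s • k) - F' x - F'' (s • k)‖ * ‖k‖ := ContinuousLinearMap.le_opNorm _ _
      _ ≤ ε * ‖k‖ * ‖k‖ := by gcongr; exact hF' s hs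
      _ = ε * ‖k‖ ^ 2 := by ring
  simpa [remainder] using norm_image_sub_le_of_norm_deriv_le_segment_01' hderiv hbound

theorem isLittleO_taylor_two_of_hasStrictFDerivAt (hF : ∀ᶠ x in 𝓝 a, HasFDerivAt F (F' x) x)
    (hF' : HasStrictFDerivAt F' F'' a) :
    (fun p : E × E => F p.1 - F p.2 - F' p.2 (p.1 - p.2) -
      (1 / 2 : ℝ) • F'' (p.1 - p.2) (p.1 - p.2)) =o[𝓝 (a, a)] fun p => ‖p.1 - p.2‖ ^ 2 := by
  refine Asymptotics.isLittleO_iff.2 fun ε hε => ?_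
  obtain ⟨r, hr, hball⟩ := Metric.eventually_nhds_iff_ball.1
    ((hF.prod_inl_nhds a).and (Asymptotics.isLittleO_iff.1 hF'.isLittleO hε))
  filter_upwards [Metric.ball_mem_nhds (a, a) hr] with ⟨y, x⟩ hyx
  rw [← ball_prod_same] at hyx hball
  have hsegment : ∀ s ∈ Icc (0 : ℝ) 1, x + s • (y - x) ∈ Metric.ball a r := fun s hs =>
    (convex_ball a r).add_smul_sub_mem hyx.2 hyx.1 hs
  have hremainder := norm_taylor_two_remainder_le (F'' := F'') (ε := ε)
    (fun s hs => (hball (x + s • (y - x), x) ⟨hsegment s hs, hyx.2⟩).1) fun s hs => by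
      have hstrict :=
        (hball (x + s • (y - x), x) ⟨hsegment s (Ico_subset_Icc_self hs), hyx.2⟩).2
      simp only [add_sub_cancel_left] at hstrict
      refine hstrict.trans ?_
      rw [norm_smul, Real.norm_of_nonneg hs.1]
      gcongr
      exact mul_le_of_le_one_left (norm_nonneg _) hs.2.le
  simpa using hremainder

/-- The second-order Taylor quotient `2 t⁻² (F (x + t k) - F x - t F'(x) k)` of `F` at `x` along
`k`, with `F'` in the role of the derivative of `F`. -/
def taylorQuotient (F : E → G) (F' : E → E →L[ℝ] G) (x : E) (t : ℝ) (k : E) : G :=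
  (2 / t ^ 2) • (F (x + t • k) - F x - t • F' x k)

theorem map_add_smul_eq_taylorQuotient {t : ℝ} (ht : t ≠ 0) (x k : E) :
    F (x + t • k) = F x + t • F' x k + (t ^ 2 / 2) • taylorQuotient F F' x t k := by
  rw [taylorQuotient, smul_smul, show t ^ 2 / 2 * (2 / t ^ 2) = 1 by field_simp, one_smul]
  abel

theorem tendsto_taylorQuotient (hF : ∀ᶠ x in 𝓝 a, HasFDerivAt F (F' x) x)
    (hF' : HasStrictFDerivAt F' F'' a) {l : Filter ι} {t : ι → ℝ} {x k : ι → E} {h : E}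
    (ht : Tendsto t l (𝓝[≠] 0)) (hx : Tendsto x l (𝓝 a)) (hk : Tendsto k l (𝓝 h)) :
    Tendsto (fun i => taylorQuotient F F' (x i) (t i) (k i)) l (𝓝 (F'' h h)) := by
  have ht₀ : Tendsto t l (𝓝 0) := ht.mono_right nhdsWithin_le_nhds
  have hy : Tendsto (fun i => x i + t i • k i) l (𝓝 a) := by
    simpa using hx.add (ht₀.smul hk)
  have hsize : (fun i => ‖t i • k i‖ ^ 2) =O[l] fun i => t i ^ 2 := by
    refine Asymptotics.IsBigO.pow (Asymptotics.IsBigO.norm_left ?_) 2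
    simpa using (Asymptotics.isBigO_refl t l).smul (hk.isBigO_one ℝ)
  have hremainder := ((isLittleO_taylor_two_of_hasStrictFDerivAt hF hF').comp_tendsto
    (hy.prodMk_nhds hx))
  simp only [Function.comp_def, add_sub_cancel_left] at hremainder
  have hlimit := (hremainder.trans_isBigO hsize).tendsto_inv_smul_nhds_zero.const_smul (2 : ℝ)
  have hF''k : Tendsto (fun i => F'' (k i) (k i)) l (𝓝 (F'' h h)) :=
    (F''.continuous₂.tendsto (h, h)).comp (hk.prodMk_nhds hk)
  have hsum := hlimit.add hF''k
  rw [smul_zero, zero_add] at hsum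
  refine hsum.congr' ?_
  filter_upwards [ht.eventually self_mem_nhdsWithin] with i hi
  have hti : t i ≠ 0 := hi
  simp only [taylorQuotient, map_smul, smul_apply]
  match_scalars <;> field_simp
  ring

end Taylor

section StrictConstraintQualification

variable {E G : Type*} [NormedAddCommGroup E] [NormedSpace ℝ E]
  [NormedAddCommGroup G] [NormedSpace ℝ G]

theorem exists_sub_eq_of_mem_span_pointedCone {C : PointedCone ℝ G} {w : G}
    (hw : w ∈ Submodule.span ℝ (C : Set G)) : ∃ a ∈ C, ∃ b ∈ C, a - b = w := by
  induction hw using Submodule.span_induction with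
  | mem x hx => exact ⟨x, hx, 0, C.zero_mem, sub_zero x⟩
  | zero => exact ⟨0, C.zero_mem, 0, C.zero_mem, sub_zero 0⟩
  | add x y _ _ hx hy =>
    obtain ⟨a, ha, b, hb, rfl⟩ := hx
    obtain ⟨c, hc, d, hd, rfl⟩ := hy
    exact ⟨a + c, C.add_mem ha hc, b + d, C.add_mem hb hd, by abel⟩
  | smul r x _ hx =>
    obtain ⟨a, ha, b, hb, rfl⟩ := hx
    rcases le_total 0 r with hr | hr
    · exact ⟨r • a, C.smul_mem hr ha, r • b, C.smul_mem hr hb, (smul_sub r a b).symm⟩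
    · have hr' : 0 ≤ -r := neg_nonneg.2 hr
      exact ⟨-r • b, C.smul_mem hr' hb, -r • a, C.smul_mem hr' ha, by module⟩

theorem coe_affineSpan_eq_span_of_zero_mem {s : Set G} (hs : (0 : G) ∈ s) :
    (affineSpan ℝ s : Set G) = Submodule.span ℝ s := by
  simpa only [insert_eq_of_mem hs] using affineSpan_insert_zero (k := ℝ) (s := s)

theorem mem_intrinsicInterior_pointedCone_iff {C : PointedCone ℝ G} {w : G} :
    w ∈ intrinsicInterior ℝ (C : Set G) ↔
      w ∈ C ∧ (C : Set G) ∈ 𝓝[Submodule.span ℝ (C : Set G)] w := by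
  rw [mem_intrinsicInterior, ← coe_affineSpan_eq_span_of_zero_mem C.zero_mem]
  simp only [mem_interior_iff_mem_nhds]
  constructor
  · rintro ⟨y, hy, rfl⟩
    exact ⟨mem_preimage.1 (mem_of_mem_nhds hy), preimage_coe_mem_nhds_subtype.1 hy⟩
  · rintro ⟨hw, hnhds⟩
    exact ⟨⟨w, subset_affineSpan ℝ _ hw⟩, preimage_coe_mem_nhds_subtype.2 hnhds, rfl⟩

theorem add_mem_intrinsicInterior_pointedCone {C : PointedCone ℝ G} {w c : G}
    (hw : w ∈ intrinsicInterior ℝ (C : Set G)) (hc : c ∈ C) :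
    w + c ∈ intrinsicInterior ℝ (C : Set G) := by
  rw [mem_intrinsicInterior_pointedCone_iff] at hw ⊢
  refine ⟨C.add_mem hw.1 hc, ?_⟩
  have hshift : Tendsto (fun z => z - c) (𝓝[Submodule.span ℝ (C : Set G)] (w + c))
      (𝓝[Submodule.span ℝ (C : Set G)] w) := by
    refine tendsto_nhdsWithin_iff.2 ⟨?_, ?_⟩
    · simpa using (tendsto_id.sub_const c).mono_left
        (nhdsWithin_le_nhds (a := w + c) (s := Submodule.span ℝ (C : Set G)))
    · filter_upwards [self_mem_nhdsWithin] with z hz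
      exact Submodule.sub_mem _ hz (Submodule.subset_span hc)
  filter_upwards [hshift hw.2] with z hz
  simpa using C.add_mem hz hc

/-- The strict constraint qualification `range A - N = G` for the inclusion `A h ∈ N`. -/
def StrictCQ (A : E →L[ℝ] G) (N : Set G) : Prop :=
  {z | ∃ h, ∃ v ∈ N, z = A h - v} = univ

variable {A : E →L[ℝ] G} {C : PointedCone ℝ G}

theorem StrictCQ.exists_map_eq_add {N : Set G} (hCQ : StrictCQ A N) (z : G) :
    ∃ h, ∃ v ∈ N, A h = z + v := by
  obtain ⟨h, v, hv, rfl⟩ := hCQ.symm ▸ mem_univ z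
  exact ⟨h, v, hv, (sub_add_cancel _ _).symm⟩

theorem StrictCQ.exists_map_eq_add_of_map_mem_span (hCQ : StrictCQ A C) {h : E}
    (hh : A h ∈ Submodule.span ℝ (C : Set G)) (w : G) :
    ∃ k, (∃ c ∈ C, A k = w + c) ∧ ∃ c ∈ C, A (k + h) = w + c := by
  obtain ⟨a, ha, b, hb, hab⟩ := exists_sub_eq_of_mem_span_pointedCone hh
  obtain ⟨k, v, hv, hk⟩ := hCQ.exists_map_eq_add (w + b)
  refine ⟨k, ⟨b + v, C.add_mem hb hv, by rw [hk, add_assoc]⟩, a + v, C.add_mem ha hv, ?_⟩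
  rw [map_add, hk, ← hab]
  abel

theorem StrictCQ.mem_affineSpan_preimage_iff (hCQ : StrictCQ A C) {h : E} :
    h ∈ (affineSpan ℝ (A ⁻¹' C) : Set E) ↔ A h ∈ Submodule.span ℝ (C : Set G) := by
  rw [coe_affineSpan_eq_span_of_zero_mem (by simp)]
  constructor
  · intro hh
    have hspan : Submodule.span ℝ (A ⁻¹' C) ≤
        (Submodule.span ℝ (C : Set G)).comap (A : E →ₗ[ℝ] G) :=
      Submodule.span_le.2 fun x hx => Submodule.subset_span hx
    exact hspan hh
  · intro hh
    obtain ⟨k, ⟨c, hc, hk⟩, d, hd, hkh⟩ := hCQ.exists_map_eq_add_of_map_mem_span hh 0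
    rw [zero_add] at hk hkh
    rw [← add_sub_cancel_left k h]
    exact Submodule.sub_mem _ (Submodule.subset_span (by simpa [← hkh] using hd))
      (Submodule.subset_span (by simpa [← hk] using hc))

theorem StrictCQ.exists_map_mem_intrinsicInterior [FiniteDimensional ℝ G] (hCQ : StrictCQ A C)
    {h : E} (hh : A h ∈ Submodule.span ℝ (C : Set G)) :
    ∃ k, A k ∈ intrinsicInterior ℝ (C : Set G) ∧
      A (k + h) ∈ intrinsicInterior ℝ (C : Set G) := by
  obtain ⟨w, hw⟩ := Set.Nonempty.intrinsicInterior C.toConvexCone.convex ⟨0, C.zero_mem⟩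
  obtain ⟨k, ⟨c, hc, hk⟩, d, hd, hkh⟩ := hCQ.exists_map_eq_add_of_map_mem_span hh w
  exact ⟨k, hk ▸ add_mem_intrinsicInterior_pointedCone hw hc,
    hkh ▸ add_mem_intrinsicInterior_pointedCone hw hd⟩

end StrictConstraintQualification

section TangentCurves

variable {E G : Type*} [NormedAddCommGroup E] [NormedSpace ℝ E] [CompleteSpace E]
  [NormedAddCommGroup G] [NormedSpace ℝ G] [FiniteDimensional ℝ G] {a : E}

theorem exists_curve_in_fiber {f : E → G} {f' : E →L[ℝ] G} (hf : HasStrictFDerivAt f f' a)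
    (hf' : f'.range = ⊤) {v : E} (hv : f' v = 0) :
    ∃ γ : ℝ → E, γ 0 = a ∧ HasDerivAt γ v 0 ∧ ∀ᶠ t in 𝓝 0, f (γ t) = f a := by
  let line : ℝ → f'.ker := fun t => t • ⟨v, hv⟩
  have hline : HasDerivAt line ⟨v, hv⟩ 0 := by
    simpa using (hasDerivAt_id (0 : ℝ)).smul_const (⟨v, hv⟩ : f'.ker)
  have hline₀ : line 0 = 0 := zero_smul _ _
  refine ⟨fun t => hf.implicitFunction f f' hf' (f a) (line t), by simp [hline₀], ?_, ?_⟩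
  · exact HasFDerivAt.comp_hasDerivAt (0 : ℝ)
      (hline₀ ▸ (hf.to_implicitFunction hf').hasFDerivAt) hline
  · have hlim : Tendsto (fun t => (f a, line t)) (𝓝 0) (𝓝 (f a, 0)) :=
      tendsto_const_nhds.prodMk_nhds (hline₀ ▸ hline.continuousAt.tendsto)
    exact hlim.eventually (hf.map_implicitFunction_eq hf')

theorem exists_curve_into_pointedCone {F : E → G} {A : E →L[ℝ] G} (hF : HasStrictFDerivAt F A a)
    (hFa : F a = 0) {C : PointedCone ℝ G} (hCQ : StrictCQ A C) {k : E}
    (hk : A k ∈ intrinsicInterior ℝ (C : Set G)) :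
    ∃ γ : ℝ → E, γ 0 = a ∧ HasDerivAt γ k 0 ∧ ∀ᶠ t in 𝓝[>] 0, F (γ t) ∈ C := by
  set W := Submodule.span ℝ (C : Set G)
  obtain ⟨hAk, hnhds⟩ := mem_intrinsicInterior_pointedCone_iff.1 hk
  let w : W := ⟨A k, Submodule.subset_span hAk⟩
  -- `A` need not be surjective, but `(h, ω) ↦ A h - ω` is, on `E × W`.
  have hgap : HasStrictFDerivAt (fun p : E × W => F p.1 - p.2)
      (A ∘L .fst ℝ E W - W.subtypeL ∘L .snd ℝ E W) (a, 0) :=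
    (HasStrictFDerivAt.comp (a, (0 : W)) hF hasStrictFDerivAt_fst).sub
      (W.subtypeL ∘L .snd ℝ E W).hasStrictFDerivAt
  have hsurj : (A ∘L .fst ℝ E W - W.subtypeL ∘L .snd ℝ E W).range = ⊤ := by
    refine LinearMap.range_eq_top.2 fun z => ?_
    obtain ⟨h, v, hv, hh⟩ := hCQ.exists_map_eq_add z
    exact ⟨(h, ⟨v, Submodule.subset_span hv⟩), by simp [hh]⟩
  obtain ⟨Γ, hΓ₀, hΓ, hfiber⟩ := exists_curve_in_fiber hgap hsurj (v := (k, w)) (by simp [w])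
  refine ⟨fun t => (Γ t).1, by simp [hΓ₀], hΓ.fst, ?_⟩
  have hω : HasDerivAt (fun t => (Γ t).2) w 0 := hΓ.snd
  have hslope : Tendsto (fun t => t⁻¹ • (Γ t).2) (𝓝[>] 0) (𝓝 w) := by
    simpa [hΓ₀] using hω.tendsto_slope_zero_right
  filter_upwards [self_mem_nhdsWithin, hfiber.filter_mono nhdsWithin_le_nhds,
    hslope (preimage_coe_mem_nhds_subtype.2 hnhds)] with t ht hFt hωt
  have ht : 0 < t := ht
  have hFω : F (Γ t).1 = (Γ t).2 := by simpa [hΓ₀, hFa, sub_eq_zero] using hFt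
  have hscaled : t • ((t⁻¹ • (Γ t).2 : W) : G) ∈ C := C.smul_mem ht.le hωt
  rwa [Submodule.coe_smul, smul_inv_smul₀ ht.ne', ← hFω] at hscaled

theorem StrictCQ.exists_tendsto_map_mem_pointedCone {F : E → G} {A : E →L[ℝ] G}
    {C : PointedCone ℝ G} (hCQ : StrictCQ A C) (hF : HasStrictFDerivAt F A a) (hFa : F a = 0)
    {h : E} (hh : A h ∈ Submodule.span ℝ (C : Set G)) :
    ∃ x k : ℝ → E, Tendsto x (𝓝[>] 0) (𝓝 a) ∧ Tendsto k (𝓝[>] 0) (𝓝 h) ∧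
      ∀ᶠ t in 𝓝[>] 0, F (x t) ∈ C ∧ F (x t + t • k t) ∈ C := by
  obtain ⟨d, hd, hdh⟩ := hCQ.exists_map_mem_intrinsicInterior hh
  obtain ⟨X, hX₀, hX, hXC⟩ := exists_curve_into_pointedCone hF hFa hCQ hd
  obtain ⟨Y, hY₀, hY, hYC⟩ := exists_curve_into_pointedCone hF hFa hCQ hdh
  refine ⟨X, fun t => t⁻¹ • (Y t - X t), ?_, ?_, ?_⟩
  · exact hX₀ ▸ hX.continuousAt.tendsto.mono_left nhdsWithin_le_nhds
  · simpa [hX₀, hY₀, ← smul_sub] using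
      hY.tendsto_slope_zero_right.sub hX.tendsto_slope_zero_right
  · filter_upwards [self_mem_nhdsWithin, hXC, hYC] with t ht hXt hYt
    have ht : t ≠ 0 := ne_of_gt ht
    exact ⟨hXt, by rwa [smul_inv_smul₀ ht, add_sub_cancel]⟩

end TangentCurves

section NormalCone

variable {m : ℕ} {Q : Set (EuclideanSpace ℝ (Fin m))} {lam mu y : EuclideanSpace ℝ (Fin m)}

theorem coe_inner_le_supportFn (hmu : mu ∈ Q) (y : EuclideanSpace ℝ (Fin m)) :
    ((⟪mu, y⟫_ℝ : ℝ) : EReal) ≤ supportFn Q y :=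
  le_iSup₂ (f := fun z (_ : z ∈ Q) => ((⟪z, y⟫_ℝ : ℝ) : EReal)) mu hmu

theorem supportFn_eq_coe_inner_iff (hmu : mu ∈ Q) :
    supportFn Q y = ((⟪mu, y⟫_ℝ : ℝ) : EReal) ↔ y ∈ normalCone Q mu := by
  rw [← (coe_inner_le_supportFn hmu y).ge_iff_eq', supportFn, iSup₂_le_iff]
  refine forall₂_congr fun z _ => ?_
  rw [EReal.coe_le_coe_iff, inner_sub_right, sub_nonpos, real_inner_comm y z, real_inner_comm y mu]

/-- The normal cone `normalCone Q lam` bundled as a pointed convex cone. -/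
def normalPointedCone (Q : Set (EuclideanSpace ℝ (Fin m))) (lam : EuclideanSpace ℝ (Fin m)) :
    PointedCone ℝ (EuclideanSpace ℝ (Fin m)) where
  carrier := normalCone Q lam
  add_mem' hv hw y hy := by
    rw [inner_add_left]
    exact add_nonpos (hv y hy) (hw y hy)
  zero_mem' y _ := (inner_zero_left _).le
  smul_mem' c v hv y hy := by
    change ⟪(c : ℝ) • v, y - lam⟫_ℝ ≤ 0
    rw [real_inner_smul_left]
    exact mul_nonpos_of_nonneg_of_nonpos c.2 (hv y hy)

theorem tangentConeSet_eq_closure_hull (hQ : Convex ℝ Q) (lam : EuclideanSpace ℝ (Fin m)) :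
    tangentConeSet Q lam =
      (ConvexCone.hull ℝ ((fun z => z - lam) '' Q)).closure := by
  have hconv : Convex ℝ ((fun z => z - lam) '' Q) := by
    simpa only [sub_eq_neg_add] using hQ.translate (-lam)
  rw [ConvexCone.coe_closure, ConvexCone.coe_hull_of_convex hconv, tangentConeSet]
  congr 1
  ext v
  simp

theorem mem_tangentConeSet_iff (hQ : Convex ℝ Q) (hlam : lam ∈ Q) :
    y ∈ tangentConeSet Q lam ↔ ∀ v ∈ normalCone Q lam, ⟪v, y⟫_ℝ ≤ 0 := by
  constructor
  · intro hy v hv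
    have hhalfspace : IsClosed {y : EuclideanSpace ℝ (Fin m) | ⟪v, y⟫_ℝ ≤ 0} :=
      isClosed_le (by fun_prop) continuous_const
    refine closure_minimal (fun z hz => ?_) hhalfspace hy
    simp only [mem_iUnion, mem_smul_set, mem_image] at hz
    obtain ⟨t, ht, _, ⟨q, hq, rfl⟩, rfl⟩ := hz
    rw [mem_ofPred_eq, real_inner_smul_right]
    exact mul_nonpos_of_nonneg_of_nonpos (le_of_lt ht) (hv q hq)
  · intro hy
    set K := ConvexCone.hull ℝ ((fun z => z - lam) '' Q)
    have hsub : ∀ q ∈ Q, q - lam ∈ K.closure := fun q hq =>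
      subset_closure (ConvexCone.subset_hull ⟨q, hq, rfl⟩)
    have hzero : K.closure.Pointed := by
      simpa [ConvexCone.Pointed] using hsub lam hlam
    let T : ProperCone ℝ (EuclideanSpace ℝ (Fin m)) :=
      ⟨K.closure.toPointedCone hzero, isClosed_closure⟩
    rw [tangentConeSet_eq_closure_hull hQ]
    by_contra hyT
    obtain ⟨z, hz, hyz⟩ := T.hyperplane_separation' (x₀ := y) hyT
    have hneg : -z ∈ normalCone Q lam := fun q hq => by
      rw [inner_neg_left, neg_nonpos, real_inner_comm]
      exact hz _ (hsub q hq)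
    have hyneg := hy (-z) hneg
    rw [inner_neg_left, neg_nonpos, real_inner_comm] at hyneg
    exact hyneg.not_gt hyz

theorem linTangent_eq_orthogonal_span_normalCone (hQ : Convex ℝ Q) (hlam : lam ∈ Q) :
    linTangent Q lam = (Submodule.span ℝ (normalCone Q lam))ᗮ := by
  ext u
  have hspan : u ∈ (Submodule.span ℝ (normalCone Q lam))ᗮ ↔
      ∀ v ∈ normalCone Q lam, ⟪v, u⟫_ℝ = 0 := by
    rw [← Submodule.span_singleton_le_iff_mem, ← Submodule.isOrtho_iff_le, Submodule.isOrtho_comm,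
      Submodule.isOrtho_span]
    simp
  rw [SetLike.mem_coe, hspan, linTangent, mem_inter_iff, Set.mem_neg,
    mem_tangentConeSet_iff hQ hlam, mem_tangentConeSet_iff hQ hlam]
  simp only [inner_neg_right, neg_nonpos, le_antisymm_iff, forall_and]

theorem exists_mem_linTangent_inner_pos (hQ : Convex ℝ Q) (hlam : lam ∈ Q)
    {w : EuclideanSpace ℝ (Fin m)} (hw : w ∉ Submodule.span ℝ (normalCone Q lam)) :
    ∃ v ∈ linTangent Q lam, 0 < ⟪v, w⟫_ℝ := by
  rw [linTangent_eq_orthogonal_span_normalCone hQ hlam]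
  rw [← Submodule.orthogonal_orthogonal (Submodule.span ℝ (normalCone Q lam)),
    Submodule.mem_orthogonal] at hw
  push Not at hw
  obtain ⟨v, hv, hvw⟩ := hw
  rcases hvw.lt_or_gt with hneg | hpos
  · exact ⟨-v, Submodule.neg_mem _ hv, by rwa [inner_neg_left, neg_pos]⟩
  · exact ⟨v, hv, hpos⟩

end NormalCone

section UniformPaths

variable {m : ℕ} {Q : Set (EuclideanSpace ℝ (Fin m))} {lambar : EuclideanSpace ℝ (Fin m)}

theorem exists_unit_mem_of_forall_seq {Z : Type*} [TopologicalSpace Z]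
    [FirstCountableTopology Z] {Y : Type*} [NormedAddCommGroup Y]
    [InnerProductSpace ℝ Y] {s : Set Z} {a : Z} {S : Z → Submodule ℝ Y} {v w : Y}
    (hS : ∀ z : ℕ → Z, (∀ k, z k ∈ s) → Tendsto z atTop (𝓝 a) →
      ∃ vs : ℕ → Y, (∀ k, vs k ∈ S (z k)) ∧ Tendsto vs atTop (𝓝 v))
    (hvw : 0 < ⟪v, w⟫_ℝ) :
    ∃ c > 0, ∀ᶠ z in 𝓝[s] a, ∃ u ∈ S z, ‖u‖ = 1 ∧ c < ⟪u, w⟫_ℝ := by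
  have hv : 0 < ‖v‖ := norm_pos_iff.2 fun hv => by simp [hv] at hvw
  refine ⟨⟪v, w⟫_ℝ / ‖v‖ / 2, by positivity, ?_⟩
  by_contra hfreq
  rw [eventually_nhdsWithin_iff, not_eventually] at hfreq
  obtain ⟨z, hz, hbad⟩ := exists_seq_forall_of_frequently hfreq
  simp only [Classical.not_imp] at hbad
  obtain ⟨vs, hvs, hlim⟩ := hS z (fun k => (hbad k).1) hz
  have hratio : Tendsto (fun k => ⟪vs k, w⟫_ℝ / ‖vs k‖) atTop (𝓝 (⟪v, w⟫_ℝ / ‖v‖)) :=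
    (hlim.inner tendsto_const_nhds).div hlim.norm hv.ne'
  obtain ⟨k, hk, hpos⟩ := ((hratio.eventually_const_lt (half_lt_self (by positivity))).and
    (hlim.norm.eventually_const_lt hv)).exists
  refine (hbad k).2 ⟨‖vs k‖⁻¹ • vs k, Submodule.smul_mem _ _ (hvs k), ?_, ?_⟩
  · rw [norm_smul, norm_inv, norm_norm, inv_mul_cancel₀ hpos.ne']
  · rwa [real_inner_smul_left, inv_mul_eq_div]

theorem uSOTP.exists_unit_paths (hQ : uSOTP Q lambar) {v w : EuclideanSpace ℝ (Fin m)}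
    (hv : v ∈ linTangent Q lambar) (hvw : 0 < ⟪v, w⟫_ℝ) :
    ∃ δ > 0, ∃ M, ∃ c > 0, ∀ᶠ lam in 𝓝[Q] lambar, ∃ u ∈ linTangent Q lam,
      ‖u‖ = 1 ∧ c < ⟪u, w⟫_ℝ ∧
        ∀ s ∈ Icc (0 : ℝ) δ, ∃ r, ‖r‖ ≤ M ∧ lam + s • u + (s ^ 2 / 2) • r ∈ Q := by
  obtain ⟨δ, hδ, M, -, V, hV, S, hlin, hlim, hpath⟩ := hQ
  obtain ⟨c, hc, hunit⟩ := exists_unit_mem_of_forall_seq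
    (fun lams hlams hto => (hlim lams hlams hto).1 v hv) hvw
  refine ⟨δ, hδ, M, c, hc, ?_⟩
  filter_upwards [hunit, self_mem_nhdsWithin, mem_nhdsWithin_of_mem_nhds hV]
    with lam ⟨u, hu, hnorm, hcu⟩ hlamQ hlamV
  obtain ⟨r, hr⟩ := hpath lam ⟨hlamQ, hlamV⟩ u hu hnorm
  exact ⟨u, hlin lam ⟨hlamQ, hlamV⟩ hu, hnorm, hcu, fun s hs => ⟨r s, hr s hs⟩⟩

end UniformPaths

section Multipliers

open ContinuousLinearMap (adjoint)

variable {m : ℕ} {Q : Set (EuclideanSpace ℝ (Fin m))} {lambar : EuclideanSpace ℝ (Fin m)}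
  {E ι : Type*} [NormedAddCommGroup E] [InnerProductSpace ℝ E] [CompleteSpace E]
  {A : E →L[ℝ] EuclideanSpace ℝ (Fin m)}

theorem StrictCQ.exists_inner_sub_le (hCQ : StrictCQ A (normalCone Q lambar))
    (w : EuclideanSpace ℝ (Fin m)) :
    ∃ c ≥ 0, ∀ lam ∈ Q, ⟪w, lam - lambar⟫_ℝ ≤ c * ‖adjoint A (lam - lambar)‖ := by
  obtain ⟨h, v, hv, hh⟩ := hCQ.exists_map_eq_add (-w)
  refine ⟨‖-h‖, norm_nonneg _, fun lam hlam => ?_⟩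
  have hw : w = v + A (-h) := by rw [map_neg, hh]; abel
  calc ⟪w, lam - lambar⟫_ℝ = ⟪v, lam - lambar⟫_ℝ + ⟪-h, adjoint A (lam - lambar)⟫_ℝ := by
        rw [ContinuousLinearMap.adjoint_inner_right, ← inner_add_left, ← hw]
    _ ≤ 0 + ‖-h‖ * ‖adjoint A (lam - lambar)‖ :=
        add_le_add (hv lam hlam) (real_inner_le_norm _ _)
    _ = ‖-h‖ * ‖adjoint A (lam - lambar)‖ := zero_add _

theorem StrictCQ.exists_norm_sub_le (hCQ : StrictCQ A (normalCone Q lambar)) :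
    ∃ c ≥ 0, ∀ lam ∈ Q, ‖lam - lambar‖ ≤ c * ‖adjoint A (lam - lambar)‖ := by
  let b := EuclideanSpace.basisFun (Fin m) ℝ
  choose c hc₀ hc using hCQ.exists_inner_sub_le
  refine ⟨∑ i, max (c (b i)) (c (-b i)),
    Finset.sum_nonneg fun i _ => le_max_of_le_left (hc₀ (b i)), fun lam hlam => ?_⟩
  calc ‖lam - lambar‖ = ‖∑ i, ⟪b i, lam - lambar⟫_ℝ • b i‖ := by rw [b.sum_repr']
    _ ≤ ∑ i, |⟪b i, lam - lambar⟫_ℝ| :=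
        (norm_sum_le _ _).trans_eq (by simp [norm_smul])
    _ ≤ ∑ i, max (c (b i)) (c (-b i)) * ‖adjoint A (lam - lambar)‖ := by
        refine Finset.sum_le_sum fun i _ => abs_le'.2 ⟨?_, ?_⟩
        · exact (hc (b i) lam hlam).trans (by gcongr; exact le_max_left _ _)
        · rw [← inner_neg_left]
          exact (hc (-b i) lam hlam).trans (by gcongr; exact le_max_right _ _)
    _ = _ := (Finset.sum_mul _ _ _).symm

theorem StrictCQ.tendsto_of_tendsto_adjoint (hCQ : StrictCQ A (normalCone Q lambar))
    {l : Filter ι} {B : ι → E →L[ℝ] EuclideanSpace ℝ (Fin m)}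
    {mu : ι → EuclideanSpace ℝ (Fin m)} (hB : Tendsto B l (𝓝 A)) (hmu : ∀ᶠ i in l, mu i ∈ Q)
    (hadj : Tendsto (fun i => adjoint (B i) (mu i)) l (𝓝 (adjoint A lambar))) :
    Tendsto mu l (𝓝 lambar) := by
  obtain ⟨c, hc₀, hc⟩ := hCQ.exists_norm_sub_le
  have hB₀ : Tendsto (fun i => c * ‖B i - A‖) l (𝓝 0) := by
    simpa using (tendsto_iff_norm_sub_tendsto_zero.1 hB).const_mul c
  have hBlam : Tendsto (fun i => adjoint (B i) lambar) l (𝓝 (adjoint A lambar)) :=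
    ((adjoint.continuous.clm_apply continuous_const).tendsto A).comp hB
  have hgap : Tendsto (fun i => 2 * c * ‖adjoint (B i) (mu i - lambar)‖) l (𝓝 0) := by
    simpa using (hadj.sub hBlam).norm.const_mul (2 * c)
  refine tendsto_iff_norm_sub_tendsto_zero.2 (squeeze_zero' (.of_forall fun _ => norm_nonneg _)
    ?_ hgap)
  filter_upwards [hmu, hB₀.eventually_le_const one_half_pos] with i hi hsmall
  have hsplit : adjoint A (mu i - lambar) =
      adjoint (B i) (mu i - lambar) - adjoint (B i - A) (mu i - lambar) := by
    rw [map_sub adjoint, sub_apply, sub_sub_cancel]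
  have hdiff : ‖adjoint (B i - A) (mu i - lambar)‖ ≤ ‖B i - A‖ * ‖mu i - lambar‖ := by
    simpa only [LinearIsometryEquiv.norm_map] using (adjoint (B i - A)).le_opNorm (mu i - lambar)
  have hestimate : ‖mu i - lambar‖ ≤
      c * ‖adjoint (B i) (mu i - lambar)‖ + 1 / 2 * ‖mu i - lambar‖ :=
    calc ‖mu i - lambar‖ ≤ c * ‖adjoint A (mu i - lambar)‖ := hc _ hi
      _ ≤ c * (‖adjoint (B i) (mu i - lambar)‖ + ‖B i - A‖ * ‖mu i - lambar‖) := by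
          rw [hsplit]
          gcongr
          exact (norm_sub_le _ _).trans (by gcongr)
      _ = c * ‖adjoint (B i) (mu i - lambar)‖ + c * ‖B i - A‖ * ‖mu i - lambar‖ := by ring
      _ ≤ _ := by gcongr
  linarith

end Multipliers

section Liminf

variable {ι : Type*} {l : Filter ι}

theorem coe_le_liminf_of_tendsto {f : ι → ℝ} {u : ι → EReal} {b : ℝ} (hf : Tendsto f l (𝓝 b))
    (hfu : ∀ᶠ i in l, (f i : EReal) ≤ u i) : (b : EReal) ≤ liminf u l := by
  rcases l.eq_or_neBot with rfl | _
  · simp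
  · rw [← ((continuous_coe_real_ereal.tendsto b).comp hf).liminf_eq]
    exact liminf_le_liminf hfu

theorem eq_top_of_forall_pos_coe_add_mul_le {L : EReal} {b c : ℝ} (hc : 0 < c)
    (hL : ∀ K > 0, ((b + K * c : ℝ) : EReal) ≤ L) : L = ⊤ := by
  refine (EReal.eq_top_iff_forall_lt L).2 fun y => ?_
  have hK : 0 < (|y - b| + 1) / c := by positivity
  refine lt_of_lt_of_le (EReal.coe_lt_coe_iff.2 ?_) (hL _ hK)
  rw [div_mul_cancel₀ _ hc.ne']
  linarith [le_abs_self (y - b)]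

end Liminf

section SecondOrder

open ContinuousLinearMap (adjoint)

variable {n m : ℕ} {Q : Set (EuclideanSpace ℝ (Fin m))} {lambar : EuclideanSpace ℝ (Fin m)}
  {F : EuclideanSpace ℝ (Fin n) → EuclideanSpace ℝ (Fin m)}
  {F' : EuclideanSpace ℝ (Fin n) → EuclideanSpace ℝ (Fin n) →L[ℝ] EuclideanSpace ℝ (Fin m)}
  {F'' : EuclideanSpace ℝ (Fin n) →L[ℝ]
    EuclideanSpace ℝ (Fin n) →L[ℝ] EuclideanSpace ℝ (Fin m)}
  {xbar h : EuclideanSpace ℝ (Fin n)}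

/-- The filter of quadruples `(t, k, x, lam)` with `t ↓ 0`, `k → h`, `x → xbar`, `lam → lambar`,
where `lam ∈ Q` attains the supremum defining `supportFn Q (F x)`; attainment is expressed by
`F x ∈ normalCone Q lam`. It replaces the subgradients in `strictD2phi` by multipliers. -/
def multiplierFilter (Q : Set (EuclideanSpace ℝ (Fin m))) (lambar : EuclideanSpace ℝ (Fin m))
    (F : EuclideanSpace ℝ (Fin n) → EuclideanSpace ℝ (Fin m)) (xbar h : EuclideanSpace ℝ (Fin n)) :
    Filter (ℝ × EuclideanSpace ℝ (Fin n) × EuclideanSpace ℝ (Fin n) × EuclideanSpace ℝ (Fin m)) :=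
  (𝓝[>] 0 ×ˢ 𝓝 h ×ˢ 𝓝 xbar ×ˢ 𝓝 lambar) ⊓
    𝓟 {p | p.2.2.2 ∈ Q ∧ F p.2.2.1 ∈ normalCone Q p.2.2.2}

/-- The second-order difference quotient of `supportFn Q ∘ F` at `p = (t, k, x, lam)`, for the
subgradient `F'(x)ᵀ lam`. -/
def multiplierDQ (Q : Set (EuclideanSpace ℝ (Fin m)))
    (F : EuclideanSpace ℝ (Fin n) → EuclideanSpace ℝ (Fin m))
    (F' : EuclideanSpace ℝ (Fin n) → EuclideanSpace ℝ (Fin n) →L[ℝ] EuclideanSpace ℝ (Fin m))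
    (p : ℝ × EuclideanSpace ℝ (Fin n) × EuclideanSpace ℝ (Fin n) × EuclideanSpace ℝ (Fin m)) :
    EReal :=
  secondDQ (fun x => supportFn Q (F x)) p.2.2.1 (adjoint (F' p.2.2.1) p.2.2.2) p.1 p.2.1

theorem tendsto_multiplierFilter_iff {ι : Type*} {l : Filter ι}
    {p : ι → ℝ × EuclideanSpace ℝ (Fin n) × EuclideanSpace ℝ (Fin n) × EuclideanSpace ℝ (Fin m)} :
    Tendsto p l (multiplierFilter Q lambar F xbar h) ↔
      Tendsto (fun i => (p i).1) l (𝓝[>] 0) ∧ Tendsto (fun i => (p i).2.1) l (𝓝 h) ∧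
      Tendsto (fun i => (p i).2.2.1) l (𝓝 xbar) ∧ Tendsto (fun i => (p i).2.2.2) l (𝓝 lambar) ∧
      ∀ᶠ i in l, (p i).2.2.2 ∈ Q ∧ F (p i).2.2.1 ∈ normalCone Q (p i).2.2.2 := by
  simp only [multiplierFilter, tendsto_inf, tendsto_prod_iff', tendsto_principal, mem_ofPred_eq,
    and_assoc]

theorem tendsto_proj_multiplierFilter (Q : Set (EuclideanSpace ℝ (Fin m)))
    (lambar : EuclideanSpace ℝ (Fin m))
    (F : EuclideanSpace ℝ (Fin n) → EuclideanSpace ℝ (Fin m))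
    (xbar h : EuclideanSpace ℝ (Fin n)) :
    Tendsto (·.1) (multiplierFilter Q lambar F xbar h) (𝓝[>] 0) ∧
      Tendsto (·.2.1) (multiplierFilter Q lambar F xbar h) (𝓝 h) ∧
      Tendsto (·.2.2.1) (multiplierFilter Q lambar F xbar h) (𝓝 xbar) ∧
      Tendsto (·.2.2.2) (multiplierFilter Q lambar F xbar h) (𝓝 lambar) ∧
      ∀ᶠ p in multiplierFilter Q lambar F xbar h, p.2.2.2 ∈ Q ∧ F p.2.2.1 ∈ normalCone Q p.2.2.2 :=
  tendsto_multiplierFilter_iff.1 tendsto_id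

theorem strictD2phi_eq_liminf_multiplierDQ (hF' : ContinuousAt F' xbar)
    (hCQ : StrictCQ (F' xbar) (normalCone Q lambar)) :
    strictD2phi Q F F' xbar (adjoint (F' xbar) lambar) h =
      liminf (multiplierDQ Q F F') (multiplierFilter Q lambar F xbar h) := by
  apply le_antisymm
  · obtain ⟨ht, hk, hx, hlam, hattained⟩ :=
      tendsto_proj_multiplierFilter Q lambar F xbar h
    have hsubgradient := (((adjoint.continuous.comp continuous_fst).clm_apply
      continuous_snd).tendsto (F' xbar, lambar)).comp ((hF'.tendsto.comp hx).prodMk_nhds hlam)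
    refine liminf_le_liminf_of_le (tendsto_inf.2
      ⟨ht.prodMk (hk.prodMk (hx.prodMk hsubgradient)), tendsto_principal.2 ?_⟩)
    exact hattained.mono fun p hp =>
      ⟨p.2.2.2, hp.1, rfl, (supportFn_eq_coe_inner_iff hp.1).2 hp.2⟩
  · rw [strictD2phi]
    set S : Set (ℝ × _ × _ × _) := {q | ∃ lam ∈ Q, _}
    set l := (𝓝[>] (0 : ℝ) ×ˢ 𝓝 h ×ˢ 𝓝 xbar ×ˢ 𝓝 (adjoint (F' xbar) lambar)) ⊓ 𝓟 S
    have hproj : Tendsto id l l := tendsto_id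
    simp only [l, tendsto_inf, tendsto_prod_iff', tendsto_principal, id] at hproj
    obtain ⟨⟨ht, hk, hx, hv⟩, hS⟩ := hproj
    choose! lam hlamS using show ∀ q ∈ S, ∃ lam ∈ Q, q.2.2.2 = adjoint (F' q.2.2.1) lam ∧
      supportFn Q (F q.2.2.1) = ((⟪lam, F q.2.2.1⟫_ℝ : ℝ) : EReal) from fun _ hq => hq
    have hlam := hS.mono hlamS
    have hlim : Tendsto lam l (𝓝 lambar) :=
      hCQ.tendsto_of_tendsto_adjoint (hF'.tendsto.comp hx) (hlam.mono fun _ hq => hq.1)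
        (hv.congr' (hlam.mono fun _ hq => hq.2.1))
    have hmultiplier : Tendsto (fun q => (q.1, q.2.1, q.2.2.1, lam q)) l
        (multiplierFilter Q lambar F xbar h) :=
      tendsto_multiplierFilter_iff.2 ⟨ht, hk, hx, hlim, hlam.mono fun _ hq =>
        ⟨hq.1, (supportFn_eq_coe_inner_iff hq.1).1 hq.2.2⟩⟩
    refine (liminf_le_liminf_of_le hmultiplier).trans_eq (liminf_congr (hlam.mono fun q hq => ?_))
    simp only [multiplierDQ, hq.2.1]

theorem coe_inner_taylorQuotient_add_le_multiplierDQ {t : ℝ} {k x : EuclideanSpace ℝ (Fin n)}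
    {lam mu : EuclideanSpace ℝ (Fin m)} (hlam : lam ∈ Q) (hx : F x ∈ normalCone Q lam)
    (hmu : mu ∈ Q) :
    ((⟪lam, taylorQuotient F F' x t k⟫_ℝ + 2 / t ^ 2 * ⟪mu - lam, F (x + t • k)⟫_ℝ : ℝ) : EReal) ≤
      multiplierDQ Q F F' (t, k, x, lam) := by
  have hreal : ⟪lam, taylorQuotient F F' x t k⟫_ℝ + 2 / t ^ 2 * ⟪mu - lam, F (x + t • k)⟫_ℝ =
      2 / t ^ 2 * (⟪mu, F (x + t • k)⟫_ℝ - ⟪lam, F x⟫_ℝ - t * ⟪adjoint (F' x) lam, k⟫_ℝ) := by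
    simp only [taylorQuotient, real_inner_smul_right, inner_sub_right, inner_sub_left,
      ContinuousLinearMap.adjoint_inner_left]
    ring
  rw [hreal, multiplierDQ, secondDQ, (supportFn_eq_coe_inner_iff hlam).2 hx, EReal.coe_mul,
    EReal.coe_sub, EReal.coe_sub]
  refine mul_le_mul_of_nonneg_left ?_ (EReal.coe_nonneg.2 (by positivity))
  exact EReal.sub_le_sub (EReal.sub_le_sub (coe_inner_le_supportFn hmu _) le_rfl) le_rfl

theorem multiplierDQ_eq_coe_inner_taylorQuotient {t : ℝ} {k x : EuclideanSpace ℝ (Fin n)}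
    {lam : EuclideanSpace ℝ (Fin m)} (hlam : lam ∈ Q) (hx : F x ∈ normalCone Q lam)
    (hxk : F (x + t • k) ∈ normalCone Q lam) :
    multiplierDQ Q F F' (t, k, x, lam) = ((⟪lam, taylorQuotient F F' x t k⟫_ℝ : ℝ) : EReal) := by
  simp only [multiplierDQ, secondDQ, (supportFn_eq_coe_inner_iff hlam).2 hx,
    (supportFn_eq_coe_inner_iff hlam).2 hxk, taylorQuotient, real_inner_smul_right,
    inner_sub_right, ContinuousLinearMap.adjoint_inner_left, EReal.coe_mul, EReal.coe_sub]

theorem tendsto_inner_taylorQuotient_multiplierFilter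
    (hF : ∀ᶠ x in 𝓝 xbar, HasFDerivAt F (F' x) x) (hF' : HasStrictFDerivAt F' F'' xbar) :
    Tendsto (fun p : ℝ × EuclideanSpace ℝ (Fin n) × EuclideanSpace ℝ (Fin n) ×
        EuclideanSpace ℝ (Fin m) => ⟪p.2.2.2, taylorQuotient F F' p.2.2.1 p.1 p.2.1⟫_ℝ)
      (multiplierFilter Q lambar F xbar h) (𝓝 ⟪lambar, F'' h h⟫_ℝ) := by
  obtain ⟨ht, hk, hx, hlam, -⟩ :=
    tendsto_proj_multiplierFilter Q lambar F xbar h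
  exact hlam.inner (tendsto_taylorQuotient hF hF' (ht.mono_right (nhdsGT_le_nhdsNE 0)) hx hk)

theorem coe_inner_le_liminf_multiplierDQ
    (hF : ∀ᶠ x in 𝓝 xbar, HasFDerivAt F (F' x) x) (hF' : HasStrictFDerivAt F' F'' xbar) :
    ((⟪lambar, F'' h h⟫_ℝ : ℝ) : EReal) ≤
      liminf (multiplierDQ Q F F') (multiplierFilter Q lambar F xbar h) := by
  obtain ⟨-, -, -, -, hQ⟩ :=
    tendsto_proj_multiplierFilter Q lambar F xbar h
  refine coe_le_liminf_of_tendsto (tendsto_inner_taylorQuotient_multiplierFilter hF hF') ?_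
  filter_upwards [hQ] with ⟨t, k, x, lam⟩ ⟨hlam, hx⟩
  simpa using coe_inner_taylorQuotient_add_le_multiplierDQ (F' := F') (t := t) (k := k) hlam hx hlam

theorem liminf_multiplierDQ_le_coe_inner (hlambar : lambar ∈ Q)
    (hF : ∀ᶠ x in 𝓝 xbar, HasFDerivAt F (F' x) x) (hF' : HasStrictFDerivAt F' F'' xbar)
    (hF0 : F xbar = 0) (hCQ : StrictCQ (F' xbar) (normalCone Q lambar))
    (hh : F' xbar h ∈ Submodule.span ℝ (normalCone Q lambar)) :
    liminf (multiplierDQ Q F F') (multiplierFilter Q lambar F xbar h) ≤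
      ((⟪lambar, F'' h h⟫_ℝ : ℝ) : EReal) := by
  obtain ⟨x, k, hx, hk, hcone⟩ :=
    StrictCQ.exists_tendsto_map_mem_pointedCone (C := normalPointedCone Q lambar) hCQ
      (hasStrictFDerivAt_of_hasFDerivAt_of_continuousAt hF hF'.continuousAt) hF0 hh
  have hcurve : Tendsto (fun t => (t, k t, x t, lambar)) (𝓝[>] 0)
      (multiplierFilter Q lambar F xbar h) :=
    tendsto_multiplierFilter_iff.2 ⟨tendsto_id, hk, hx, tendsto_const_nhds,
      hcone.mono fun _ ht => ⟨hlambar, ht.1⟩⟩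
  calc liminf (multiplierDQ Q F F') (multiplierFilter Q lambar F xbar h)
      ≤ liminf (fun t => multiplierDQ Q F F' (t, k t, x t, lambar)) (𝓝[>] 0) :=
        liminf_le_liminf_of_le hcurve
    _ = liminf (fun t => ((⟪lambar, taylorQuotient F F' (x t) t (k t)⟫_ℝ : ℝ) : EReal))
          (𝓝[>] 0) :=
        liminf_congr (hcone.mono fun _ ht =>
          multiplierDQ_eq_coe_inner_taylorQuotient hlambar ht.1 ht.2)
    _ = ((⟪lambar, F'' h h⟫_ℝ : ℝ) : EReal) :=
        ((continuous_coe_real_ereal.tendsto _).comp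
          ((tendsto_inner_taylorQuotient_multiplierFilter hF hF').comp hcurve)).liminf_eq

theorem le_two_div_sq_mul_inner_path {Y : Type*} [NormedAddCommGroup Y] [InnerProductSpace ℝ Y]
    {u r w y y₀ b D : Y} {t c M K : ℝ} (ht : 0 < t) (hK : 0 ≤ K) (hu : ‖u‖ = 1) (hr : ‖r‖ ≤ M)
    (hy : y = y₀ + t • b + (t ^ 2 / 2) • D) (hy₀ : ⟪u, y₀⟫_ℝ = 0) (hc : c ≤ ⟪u, w⟫_ℝ) :
    2 * K * (c - ‖b - w‖) - K * t * ‖D‖ - K ^ 2 * M * ‖y‖ ≤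
      2 / t ^ 2 * ⟪(K * t) • u + ((K * t) ^ 2 / 2) • r, y⟫_ℝ := by
  have hb : c - ‖b - w‖ ≤ ⟪u, b⟫_ℝ := by
    have := neg_le_of_abs_le (abs_real_inner_le_norm u (b - w))
    rw [hu, one_mul, inner_sub_right] at this
    linarith
  have hD : -‖D‖ ≤ ⟪u, D⟫_ℝ := by
    simpa [hu] using neg_le_of_abs_le (abs_real_inner_le_norm u D)
  have hry : -(M * ‖y‖) ≤ ⟪r, y⟫_ℝ :=
    neg_le_of_abs_le ((abs_real_inner_le_norm r y).trans (by gcongr))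
  have hexpand : 2 / t ^ 2 * ⟪(K * t) • u + ((K * t) ^ 2 / 2) • r, y⟫_ℝ =
      2 * K * ⟪u, b⟫_ℝ + K * t * ⟪u, D⟫_ℝ + K ^ 2 * ⟪r, y⟫_ℝ := by
    have huy : ⟪u, y⟫_ℝ = t * ⟪u, b⟫_ℝ + t ^ 2 / 2 * ⟪u, D⟫_ℝ := by
      rw [hy, inner_add_right, inner_add_right, hy₀, zero_add, real_inner_smul_right,
        real_inner_smul_right]
    rw [inner_add_left, real_inner_smul_left, real_inner_smul_left, huy]
    field_simp
  calc 2 * K * (c - ‖b - w‖) - K * t * ‖D‖ - K ^ 2 * M * ‖y‖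
      = 2 * K * (c - ‖b - w‖) + K * t * -‖D‖ + K ^ 2 * -(M * ‖y‖) := by ring
    _ ≤ 2 * K * ⟪u, b⟫_ℝ + K * t * ⟪u, D⟫_ℝ + K ^ 2 * ⟪r, y⟫_ℝ := by gcongr
    _ = _ := hexpand.symm

theorem eventually_coe_inner_taylorQuotient_add_le_multiplierDQ (hQ : Convex ℝ Q)
    {w : EuclideanSpace ℝ (Fin m)} {δ M c K : ℝ} (hδ : 0 < δ) (hK : 0 ≤ K)
    (hpaths : ∀ᶠ lam in 𝓝[Q] lambar, ∃ u ∈ linTangent Q lam, ‖u‖ = 1 ∧ c < ⟪u, w⟫_ℝ ∧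
      ∀ s ∈ Icc (0 : ℝ) δ, ∃ r, ‖r‖ ≤ M ∧ lam + s • u + (s ^ 2 / 2) • r ∈ Q) :
    ∀ᶠ p in multiplierFilter Q lambar F xbar h,
      ((⟪p.2.2.2, taylorQuotient F F' p.2.2.1 p.1 p.2.1⟫_ℝ +
        (2 * K * (c - ‖F' p.2.2.1 p.2.1 - w‖) -
          K * p.1 * ‖taylorQuotient F F' p.2.2.1 p.1 p.2.1‖ -
          K ^ 2 * M * ‖F (p.2.2.1 + p.1 • p.2.1)‖) : ℝ) : EReal) ≤ multiplierDQ Q F F' p := by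
  obtain ⟨ht, -, -, hlam, hattained⟩ :=
    tendsto_proj_multiplierFilter Q lambar F xbar h
  have hKt : Tendsto (fun p : ℝ × _ => K * p.1) (multiplierFilter Q lambar F xbar h) (𝓝 0) := by
    simpa using (ht.mono_right nhdsWithin_le_nhds).const_mul K
  filter_upwards [ht.eventually self_mem_nhdsWithin, hKt.eventually_le_const hδ, hattained,
    (tendsto_nhdsWithin_iff.2 ⟨hlam, hattained.mono fun _ hp => hp.1⟩).eventually hpaths]
    with ⟨t, k, x, lam⟩ (ht : 0 < t) hKδ ⟨hlamQ, hFx⟩ ⟨u, hu, hu1, hcu, hpath⟩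
  -- Path time `K * t`: comparing `lam` with this point of `Q` gains `2 * K * c` in the limit.
  obtain ⟨r, hr, hmu⟩ := hpath (K * t) ⟨by positivity, hKδ⟩
  have hortho : ⟪u, F x⟫_ℝ = 0 := by
    rw [linTangent_eq_orthogonal_span_normalCone hQ hlamQ] at hu
    exact Submodule.inner_left_of_mem_orthogonal (Submodule.subset_span hFx) hu
  refine le_trans (EReal.coe_le_coe_iff.2 (add_le_add_right ?_ _))
    (coe_inner_taylorQuotient_add_le_multiplierDQ hlamQ hFx hmu)
  rw [add_assoc, add_sub_cancel_left]
  exact le_two_div_sq_mul_inner_path ht hK hu1 hr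
    (map_add_smul_eq_taylorQuotient ht.ne' x k) hortho hcu.le

theorem liminf_multiplierDQ_eq_top (hQ : Convex ℝ Q) (hlambar : lambar ∈ Q)
    (husotp : uSOTP Q lambar) (hF : ∀ᶠ x in 𝓝 xbar, HasFDerivAt F (F' x) x)
    (hF' : HasStrictFDerivAt F' F'' xbar) (hF0 : F xbar = 0)
    (hh : F' xbar h ∉ Submodule.span ℝ (normalCone Q lambar)) :
    liminf (multiplierDQ Q F F') (multiplierFilter Q lambar F xbar h) = ⊤ := by
  obtain ⟨v, hv, hvw⟩ := exists_mem_linTangent_inner_pos hQ hlambar hh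
  obtain ⟨δ, hδ, M, c, hc, hpaths⟩ := husotp.exists_unit_paths hv hvw
  refine eq_top_of_forall_pos_coe_add_mul_le (b := ⟪lambar, F'' h h⟫_ℝ) (c := 2 * c)
    (by positivity) fun K hK => ?_
  refine coe_le_liminf_of_tendsto ?_
    (eventually_coe_inner_taylorQuotient_add_le_multiplierDQ (F' := F') hQ hδ hK.le hpaths)
  obtain ⟨ht, hk, hx, -, -⟩ :=
    tendsto_proj_multiplierFilter Q lambar F xbar h
  have hD := tendsto_taylorQuotient hF hF' (ht.mono_right (nhdsGT_le_nhdsNE 0)) hx hk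
  replace ht := ht.mono_right nhdsWithin_le_nhds
  have hgap : Tendsto (fun p : ℝ × _ × _ × _ => ‖F' p.2.2.1 p.2.1 - F' xbar h‖)
      (multiplierFilter Q lambar F xbar h) (𝓝 0) := by
    simpa only [Function.comp_apply, sub_self, norm_zero] using
      (((isBoundedBilinearMap_apply.continuous.tendsto (F' xbar, h)).comp
        ((hF'.continuousAt.tendsto.comp hx).prodMk_nhds hk)).sub_const (F' xbar h)).norm
  have hvalue : Tendsto (fun p : ℝ × _ × _ × _ => ‖F (p.2.2.1 + p.1 • p.2.1)‖)
      (multiplierFilter Q lambar F xbar h) (𝓝 0) := by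
    have hpoint := hx.add (ht.smul hk)
    rw [zero_smul, add_zero] at hpoint
    simpa only [Function.comp_apply, hF0, norm_zero] using
      (hF.self_of_nhds.continuousAt.tendsto.comp hpoint).norm
  have hlimit := (tendsto_inner_taylorQuotient_multiplierFilter hF hF').add
    ((((hgap.const_sub c).const_mul (2 * K)).sub ((ht.const_mul K).mul hD.norm)).sub
      (hvalue.const_mul (K ^ 2 * M)))
  convert hlimit using 2
  ring

end SecondOrder

theorem stmt19_general {n m : ℕ} {Q : Set (EuclideanSpace ℝ (Fin m))} (hQ : Convex ℝ Q)
    {lambar : EuclideanSpace ℝ (Fin m)} (hlambar : lambar ∈ Q) (husotp : uSOTP Q lambar)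
    {xbar : EuclideanSpace ℝ (Fin n)} {F : EuclideanSpace ℝ (Fin n) → EuclideanSpace ℝ (Fin m)}
    {F' : EuclideanSpace ℝ (Fin n) → EuclideanSpace ℝ (Fin n) →L[ℝ] EuclideanSpace ℝ (Fin m)}
    {F'' : EuclideanSpace ℝ (Fin n) →L[ℝ]
      EuclideanSpace ℝ (Fin n) →L[ℝ] EuclideanSpace ℝ (Fin m)}
    (hF : ∀ᶠ x in 𝓝 xbar, HasFDerivAt F (F' x) x) (hF' : HasStrictFDerivAt F' F'' xbar)
    (hF0 : F xbar = 0) (hCQ : StrictCQ (F' xbar) (normalCone Q lambar))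
    (h : EuclideanSpace ℝ (Fin n)) :
    (h ∈ (affineSpan ℝ (F' xbar ⁻¹' normalCone Q lambar) : Set (EuclideanSpace ℝ (Fin n))) →
      strictD2phi Q F F' xbar (ContinuousLinearMap.adjoint (F' xbar) lambar) h =
        ((⟪lambar, F'' h h⟫_ℝ : ℝ) : EReal)) ∧
    (h ∉ (affineSpan ℝ (F' xbar ⁻¹' normalCone Q lambar) : Set (EuclideanSpace ℝ (Fin n))) →
      strictD2phi Q F F' xbar (ContinuousLinearMap.adjoint (F' xbar) lambar) h = ⊤) := by
  have hspan : h ∈ (affineSpan ℝ (F' xbar ⁻¹' normalCone Q lambar) : Set _) ↔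
      F' xbar h ∈ Submodule.span ℝ (normalCone Q lambar) :=
    StrictCQ.mem_affineSpan_preimage_iff (C := normalPointedCone Q lambar) hCQ
  rw [hspan, strictD2phi_eq_liminf_multiplierDQ hF'.continuousAt hCQ]
  exact ⟨fun hh => le_antisymm (liminf_multiplierDQ_le_coe_inner hlambar hF hF' hF0 hCQ hh)
      (coe_inner_le_liminf_multiplierDQ hF hF'),
    liminf_multiplierDQ_eq_top hQ hlambar husotp hF hF' hF0⟩

theorem stmt19 {n m : ℕ} (Q : Set (EuclideanSpace ℝ (Fin m)))
    (hQne : Q.Nonempty) (hQc : IsClosed Q) (hQconv : Convex ℝ Q)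
    (lambar : EuclideanSpace ℝ (Fin m)) (hlambar : lambar ∈ Q)
    (husotp : uSOTP Q lambar)
    (U : Set (EuclideanSpace ℝ (Fin n))) (hU : IsOpen U)
    (xbar : EuclideanSpace ℝ (Fin n)) (hxbar : xbar ∈ U)
    (F : EuclideanSpace ℝ (Fin n) → EuclideanSpace ℝ (Fin m))
    (F' : EuclideanSpace ℝ (Fin n) → (EuclideanSpace ℝ (Fin n) →L[ℝ] EuclideanSpace ℝ (Fin m)))
    (F'' : EuclideanSpace ℝ (Fin n) →
      (EuclideanSpace ℝ (Fin n) →L[ℝ] EuclideanSpace ℝ (Fin n) →L[ℝ] EuclideanSpace ℝ (Fin m)))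
    (hF' : ∀ x ∈ U, HasFDerivAt F (F' x) x)
    (hF'' : ∀ x ∈ U, HasFDerivAt F' (F'' x) x)
    (hF''cont : ContinuousOn F'' U)
    (hF0 : F xbar = 0)
    (hRob : (0 : EuclideanSpace ℝ (Fin m)) ∈
      interior {z | ∃ h : EuclideanSpace ℝ (Fin n), ∃ y : EuclideanSpace ℝ (Fin m),
        supportFn Q y ≠ ⊤ ∧ z = F' xbar h - y})
    (hStrict : {z | ∃ h : EuclideanSpace ℝ (Fin n), ∃ v ∈ normalCone Q lambar,
        z = F' xbar h - v} = Set.univ) :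
    ∀ h : EuclideanSpace ℝ (Fin n),
      (h ∈ (affineSpan ℝ (F' xbar ⁻¹' normalCone Q lambar) : Set (EuclideanSpace ℝ (Fin n))) →
        strictD2phi Q F F' xbar (ContinuousLinearMap.adjoint (F' xbar) lambar) h =
          ((⟪lambar, F'' xbar h h⟫_ℝ : ℝ) : EReal)) ∧
      (h ∉ (affineSpan ℝ (F' xbar ⁻¹' normalCone Q lambar) : Set (EuclideanSpace ℝ (Fin n))) →
        strictD2phi Q F F' xbar (ContinuousLinearMap.adjoint (F' xbar) lambar) h = ⊤) := by
  have hFnear := (hU.eventually_mem hxbar).mono hF'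
  have hF'strict := hasStrictFDerivAt_of_hasFDerivAt_of_continuousAt
    ((hU.eventually_mem hxbar).mono hF'') (hF''cont.continuousAt (hU.mem_nhds hxbar))
  exact stmt19_general hQconv hlambar husotp hFnear hF'strict hF0 hStrict

end
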